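/- There exists a delivery instance (an unweighted path on four vertices u, h', b, v with the hub placed at h', the unique neighbor of the leaf u, and two agents) such that the set of envy-free allocations is nonempty and the set of non-wasteful allocations is nonempty, but no allocation is both envy-free and non-wasteful. -/

import Mathlib

/-- A delivery instance: a finite tree rooted at the hub (encoded by a parent
function `par`; the edges of the tree are the pairs `{v, par v}` for `v ≠ hub`),
positive edge weights (`w v` is the weight of the edge between `v` and its
parent, for `v ≠ hub`), and `n` agents. -/
structure DeliveryInstance where
  V : Type
  fintypeV : Fintype V
  decEqV : DecidableEq V
  hub : V
  par : V → V
  w : V → ℝ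
  par_hub : par hub = hub
  reaches_hub : ∀ v : V, ∃ k : ℕ, par^[k] v = hub
  w_pos : ∀ v : V, v ≠ hub → 0 < w v
  n : ℕ
  n_pos : 0 < n

attribute [instance] DeliveryInstance.fintypeV DeliveryInstance.decEqV

namespace DeliveryInstance

variable (I : DeliveryInstance)

/-- `u` lies on the path from the hub to `v` (equivalently, `u` is a weak
ancestor of `v` in the tree rooted at the hub). -/
def Anc (u v : I.V) : Prop := ∃ k : ℕ, I.par^[k] v = u

/-- A leaf of the tree rooted at the hub: a vertex with no children. -/
def IsLeaf (v : I.V) : Prop := ∀ u : I.V, I.par u = v → u = v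

/-- The set of leaves of the topology. -/
def leaves : Set I.V := {v : I.V | I.IsLeaf v}

/-- The instance is unweighted if every edge has weight 1. -/
def Unweighted : Prop := ∀ v : I.V, v ≠ I.hub → I.w v = 1

/-- The cost of servicing a set `A` of orders: the total weight of the edges of
the tree that lie on the path from the hub to some vertex of `A` (the edge
between `u ≠ hub` and its parent lies on such a path iff `u` is a weak ancestor
of a member of `A`).  In particular `cost ∅ = 0`. -/
noncomputable def cost (A : Set I.V) : ℝ :=
  ∑ u : I.V, Set.indicator {u : I.V | u ≠ I.hub ∧ ∃ v ∈ A, I.Anc u v} I.w u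

/-- The bundle of agent `i` under allocation `π`: the set of orders serviced by `i`. -/
def bundle (π : I.V → Fin I.n) (i : Fin I.n) : Set I.V :=
  {v : I.V | v ≠ I.hub ∧ π v = i}

/-- An allocation is non-wasteful if every order `v` is serviced by an agent
that also services some leaf of the subtree rooted at `v`. -/
def NonWasteful (π : I.V → Fin I.n) : Prop :=
  ∀ v : I.V, v ≠ I.hub → ∃ l : I.V, I.IsLeaf l ∧ I.Anc v l ∧ π l = π v

/-- Total (utilitarian) cost of an allocation. -/
noncomputable def totalCost (π : I.V → Fin I.n) : ℝ :=
  ∑ i : Fin I.n, I.cost (I.bundle π i)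

/-- The maximum bundle cost of an allocation. -/
noncomputable def maxCost (π : I.V → Fin I.n) : ℝ :=
  Finset.univ.sup' ⟨⟨0, I.n_pos⟩, Finset.mem_univ _⟩ fun i : Fin I.n => I.cost (I.bundle π i)

/-- The minimax (MMS) share of the instance: the minimum over all allocations
of the maximum bundle cost. -/
noncomputable def MMSshare : ℝ :=
  Finset.univ.inf' ⟨fun _ => ⟨0, I.n_pos⟩, Finset.mem_univ _⟩
    fun π : I.V → Fin I.n => I.maxCost π

/-- An allocation is MMS if every bundle costs at most the MMS share. -/
def IsMMS (π : I.V → Fin I.n) : Prop :=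
  ∀ i : Fin I.n, I.cost (I.bundle π i) ≤ I.MMSshare

/-- Pareto optimality: no allocation makes every agent weakly better off and
some agent strictly better off. -/
def ParetoOptimal (π : I.V → Fin I.n) : Prop :=
  ¬ ∃ π' : I.V → Fin I.n,
      (∀ i : Fin I.n, I.cost (I.bundle π' i) ≤ I.cost (I.bundle π i)) ∧
      ∃ j : Fin I.n, I.cost (I.bundle π' j) < I.cost (I.bundle π j)

/-- Utilitarian optimality: minimizes the sum of bundle costs. -/
def UtilitarianOptimal (π : I.V → Fin I.n) : Prop :=
  ∀ π' : I.V → Fin I.n, I.totalCost π ≤ I.totalCost π'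

/-- Egalitarian optimality: minimizes the maximum bundle cost. -/
def EgalitarianOptimal (π : I.V → Fin I.n) : Prop :=
  ∀ π' : I.V → Fin I.n, I.maxCost π ≤ I.maxCost π'

/-- Envy-freeness. -/
def EF (π : I.V → Fin I.n) : Prop :=
  ∀ i j : Fin I.n, I.cost (I.bundle π i) ≤ I.cost (I.bundle π j)

/-- Envy-freeness up to one order. -/
def EF1 (π : I.V → Fin I.n) : Prop :=
  ∀ i j : Fin I.n,
    I.bundle π i = ∅ ∨ ∃ v ∈ I.bundle π i, I.cost (I.bundle π i \ {v}) ≤ I.cost (I.bundle π j)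

end DeliveryInstance

/-!
Every order of a non-wasteful allocation lies on the way to a leaf serviced by the same agent, so
each bundle costs as much as the leaves in it. If the cost of reaching a single order `v` exceeds
the cost of all leaves other than `v`, then the agent servicing `v` envies everybody else. On the
path `u, h', b, v` the leaf `v` costs `2` while the only other leaf `u` costs `1`. Splitting the
orders into `{u, b}` and `{v}` is envy-free, at the price of making `b` wasteful.
-/

namespace DeliveryInstance

section Tree

variable {I : DeliveryInstance} {u v : I.V}

theorem Anc.refl (v : I.V) : I.Anc v v := ⟨0, rfl⟩

theorem Anc.trans {x : I.V} : I.Anc u v → I.Anc v x → I.Anc u x := by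
  rintro ⟨k, rfl⟩ ⟨l, rfl⟩
  exact ⟨k + l, Function.iterate_add_apply I.par k l x⟩

theorem anc_par (v : I.V) : I.Anc (I.par v) v := ⟨1, rfl⟩

theorem anc_iff_eq_or_anc_par : I.Anc u v ↔ u = v ∨ I.Anc u (I.par v) := by
  constructor
  · rintro ⟨_ | k, rfl⟩
    · exact .inl rfl
    · exact .inr ⟨k, rfl⟩
  · rintro (rfl | h)
    · exact .refl _
    · exact h.trans (anc_par v)

theorem anc_hub_right_iff : I.Anc u I.hub ↔ u = I.hub := by
  constructor
  · rintro ⟨k, rfl⟩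
    exact Function.iterate_fixed I.par_hub k
  · rintro rfl
    exact .refl _

/-- The depth of a vertex: its number of edges from the hub. Its strict growth towards
children expresses that the parent function has no cycles. -/
def depth (v : I.V) : ℕ := Nat.find (I.reaches_hub v)

theorem depth_par_lt (hv : v ≠ I.hub) : depth (I.par v) < depth v := by
  have hspec : I.par^[depth v] v = I.hub := Nat.find_spec (I.reaches_hub v)
  cases hd : depth v with
  | zero =>
    rw [hd] at hspec
    exact absurd hspec hv
  | succ k =>
    rw [hd, Function.iterate_succ_apply] at hspec
    exact Nat.lt_succ_of_le (Nat.find_min' _ hspec)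

theorem depth_par_le (v : I.V) : depth (I.par v) ≤ depth v := by
  rcases eq_or_ne v I.hub with rfl | hv
  · rw [I.par_hub]
  · exact (depth_par_lt hv).le

theorem Anc.depth_le : I.Anc u v → depth u ≤ depth v := by
  rintro ⟨k, rfl⟩
  induction k with
  | zero => rfl
  | succ k ih =>
    rw [Function.iterate_succ_apply']
    exact (depth_par_le _).trans ih

theorem not_anc_par (hv : v ≠ I.hub) : ¬ I.Anc v (I.par v) := fun h =>
  (depth_par_lt hv).not_ge h.depth_le

theorem exists_isLeaf_anc (v : I.V) : ∃ l : I.V, I.IsLeaf l ∧ I.Anc v l := by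
  obtain ⟨l, hvl, hmax⟩ :=
    Set.exists_max_image {l | I.Anc v l} depth (Set.toFinite _) ⟨v, .refl v⟩
  refine ⟨l, ?_, hvl⟩
  rintro c rfl
  by_contra hc
  have hcHub : c ≠ I.hub := by
    rintro rfl
    exact hc I.par_hub.symm
  exact (depth_par_lt hcHub).not_ge (hmax c (hvl.trans (anc_par c)))

end Tree

section Cost

variable {I : DeliveryInstance} {A B : Set I.V} {v : I.V}

/-- The edges traversed to service `A`, each edge being represented by its endpoint farther from
the hub, as in `cost`. -/
def edges (A : Set I.V) : Set I.V := {u | u ≠ I.hub ∧ ∃ v ∈ A, I.Anc u v}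

theorem cost_eq_finsum_edges (A : Set I.V) : I.cost A = ∑ᶠ u ∈ edges A, I.w u := by
  rw [finsum_mem_def, finsum_eq_sum_of_fintype]
  rfl

theorem edges_subset_edges_of_anc (h : ∀ v ∈ A, ∃ a ∈ B, I.Anc v a) : edges A ⊆ edges B := by
  rintro u ⟨hu, v, hvA, huv⟩
  obtain ⟨a, haB, hva⟩ := h v hvA
  exact ⟨hu, a, haB, huv.trans hva⟩

theorem cost_le_cost_of_anc (h : ∀ v ∈ A, ∃ a ∈ B, I.Anc v a) : I.cost A ≤ I.cost B :=
  Finset.sum_le_sum fun u _ => Set.indicator_apply_le'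
    (fun huA => (Set.indicator_of_mem (edges_subset_edges_of_anc h huA) I.w).ge)
    (fun _ => Set.indicator_apply_nonneg fun huB => (I.w_pos u huB.1).le)

theorem cost_mono (h : A ⊆ B) : I.cost A ≤ I.cost B :=
  cost_le_cost_of_anc fun v hv => ⟨v, h hv, .refl v⟩

theorem cost_insert_hub (A : Set I.V) : I.cost (insert I.hub A) = I.cost A := by
  have hedges : edges (insert I.hub A) = edges A := by
    ext u
    simp only [edges, Set.mem_ofPred_eq, Set.exists_mem_insert, anc_hub_right_iff]
    tauto
  rw [cost_eq_finsum_edges, hedges, cost_eq_finsum_edges]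

theorem edges_insert (hv : v ≠ I.hub) :
    edges (insert v A) = insert v (edges (insert (I.par v) A)) := by
  ext u
  have hanc : I.Anc u v ↔ u = v ∨ I.Anc u (I.par v) := anc_iff_eq_or_anc_par
  have hne : u = v → u ≠ I.hub := fun h => h ▸ hv
  rw [Set.mem_insert_iff]
  simp only [edges, Set.mem_ofPred_eq, Set.exists_mem_insert, hanc]
  tauto

theorem cost_insert (hv : v ≠ I.hub) (hA : ∀ a ∈ A, ¬ I.Anc v a) :
    I.cost (insert v A) = I.w v + I.cost (insert (I.par v) A) := by
  have hnotMem : v ∉ edges (insert (I.par v) A) := by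
    rintro ⟨-, a, rfl | ha, hva⟩
    · exact not_anc_par hv hva
    · exact hA a ha hva
  rw [cost_eq_finsum_edges, edges_insert hv, finsum_mem_insert _ hnotMem (Set.toFinite _),
    ← cost_eq_finsum_edges]

theorem cost_singleton (hv : v ≠ I.hub) : I.cost {v} = I.w v + I.cost {I.par v} := by
  simpa only [insert_empty_eq] using cost_insert (A := ∅) hv (by simp)

theorem cost_singleton_hub : I.cost {I.hub} = 0 := by
  rw [← insert_empty_eq, cost_insert_hub]
  simp [cost]

theorem cost_singleton_of_par_eq_hub (hv : v ≠ I.hub) (hpar : I.par v = I.hub) :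
    I.cost {v} = I.w v := by
  rw [cost_singleton hv, hpar, cost_singleton_hub, add_zero]

end Cost

section NonWasteful

variable {I : DeliveryInstance} {π : I.V → Fin I.n}

theorem nonWasteful_const (i : Fin I.n) : I.NonWasteful fun _ => i := by
  intro v _
  obtain ⟨l, hl, hvl⟩ := exists_isLeaf_anc v
  exact ⟨l, hl, hvl, rfl⟩

theorem NonWasteful.cost_bundle_inter_leaves (hπ : I.NonWasteful π) (i : Fin I.n) :
    I.cost (I.bundle π i ∩ I.leaves) = I.cost (I.bundle π i) := by
  refine le_antisymm (cost_mono Set.inter_subset_left) (cost_le_cost_of_anc ?_)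
  rintro v ⟨hv, rfl⟩
  obtain ⟨l, hl, hvl, hlv⟩ := hπ v hv
  have hlHub : l ≠ I.hub := by
    rintro rfl
    exact hv (anc_hub_right_iff.mp hvl)
  exact ⟨l, ⟨⟨hlHub, hlv⟩, hl⟩, hvl⟩

theorem NonWasteful.not_ef_of_cost_leaves_sdiff_lt (hπ : I.NonWasteful π) (hn : 1 < I.n)
    {v : I.V} (hv : v ≠ I.hub) (hcost : I.cost (I.leaves \ {v}) < I.cost {v}) : ¬ I.EF π := by
  intro hEF
  have : Nontrivial (Fin I.n) := Fin.nontrivial_iff_two_le.mpr hn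
  obtain ⟨j, hj⟩ := exists_ne (π v)
  have hleaves : I.bundle π j ∩ I.leaves ⊆ I.leaves \ {v} := by
    rintro l ⟨⟨-, hlj⟩, hl⟩
    refine ⟨hl, ?_⟩
    rintro rfl
    exact hj hlj.symm
  have hvBundle : {v} ⊆ I.bundle π (π v) := Set.singleton_subset_iff.mpr ⟨hv, rfl⟩
  apply hcost.not_ge
  calc I.cost {v} ≤ I.cost (I.bundle π (π v)) := cost_mono hvBundle
    _ ≤ I.cost (I.bundle π j) := hEF (π v) j
    _ = I.cost (I.bundle π j ∩ I.leaves) := (hπ.cost_bundle_inter_leaves j).symm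
    _ ≤ I.cost (I.leaves \ {v}) := cost_mono hleaves

end NonWasteful

/-- The unweighted path `u, h', b, v` with two agents and hub `h'`, the counterexample of
`stmt17`. The vertices are encoded as `h' = 0`, `u = 1`, `b = 2`, `v = 3`. -/
noncomputable abbrev offCenterPath : DeliveryInstance where
  V := Fin 4
  fintypeV := inferInstance
  decEqV := inferInstance
  hub := 0
  par := ![0, 0, 0, 2]
  w := 1
  par_hub := rfl
  reaches_hub v := ⟨2, by revert v; decide⟩
  w_pos _ _ := one_pos
  n := 2
  n_pos := two_pos

namespace offCenterPath

theorem leaves_eq : offCenterPath.leaves = {1, 3} := by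
  have hleaf : ∀ l : Fin 4, (∀ c, offCenterPath.par c = l → c = l) ↔ l = 1 ∨ l = 3 := by decide
  exact Set.ext hleaf

theorem cost_singleton_one : offCenterPath.cost {1} = 1 :=
  cost_singleton_of_par_eq_hub (by decide) rfl

theorem cost_singleton_two : offCenterPath.cost {2} = 1 :=
  cost_singleton_of_par_eq_hub (by decide) rfl

theorem cost_singleton_three : offCenterPath.cost {3} = 2 := by
  calc offCenterPath.cost {3} = 1 + offCenterPath.cost {2} := cost_singleton (by decide)
    _ = 2 := by rw [cost_singleton_two, one_add_one_eq_two]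

theorem cost_pair_one_two : offCenterPath.cost {1, 2} = 2 := by
  have hnotAnc : ∀ a ∈ ({2} : Set (Fin 4)), ¬ offCenterPath.Anc 1 a := by
    rintro _ rfl h
    rcases anc_iff_eq_or_anc_par.mp h with h | h
    · exact absurd h (by decide)
    · exact absurd (anc_hub_right_iff.mp h) (by decide)
  calc offCenterPath.cost {1, 2} = 1 + offCenterPath.cost (insert offCenterPath.hub {2}) :=
        cost_insert (by decide) hnotAnc
    _ = 2 := by rw [cost_insert_hub, cost_singleton_two, one_add_one_eq_two]

theorem exists_ef : ∃ π, offCenterPath.EF π := by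
  let π : Fin 4 → Fin 2 := ![0, 0, 0, 1]
  have hbundle₀ : offCenterPath.bundle π 0 = {1, 2} :=
    Set.ext (by decide : ∀ x : Fin 4, x ≠ 0 ∧ π x = 0 ↔ x = 1 ∨ x = 2)
  have hbundle₁ : offCenterPath.bundle π 1 = {3} :=
    Set.ext (by decide : ∀ x : Fin 4, x ≠ 0 ∧ π x = 1 ↔ x = 3)
  have hcost : ∀ i, offCenterPath.cost (offCenterPath.bundle π i) = 2 :=
    Fin.forall_fin_two.mpr ⟨hbundle₀ ▸ cost_pair_one_two, hbundle₁ ▸ cost_singleton_three⟩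
  exact ⟨π, fun i j => ((hcost i).trans (hcost j).symm).le⟩

theorem cost_leaves_sdiff_lt :
    offCenterPath.cost (offCenterPath.leaves \ {3}) < offCenterPath.cost {3} := by
  have hsdiff : offCenterPath.leaves \ {3} = {1} := by
    rw [leaves_eq]
    exact Set.pair_sdiff_right (by decide)
  rw [hsdiff, cost_singleton_one, cost_singleton_three]
  exact one_lt_two

end offCenterPath

end DeliveryInstance

/-- There is an unweighted two-agent instance whose topology
is a path on four vertices `u, h', b, v` with the hub at `h'` (the unique
neighbor of the leaf `u`), such that envy-free allocations exist and
non-wasteful allocations exist, but no allocation is both. -/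
theorem stmt17 :
    ∃ (I : DeliveryInstance) (u b v : I.V),
      I.Unweighted ∧ I.n = 2 ∧
      u ≠ I.hub ∧ b ≠ I.hub ∧ v ≠ I.hub ∧ u ≠ b ∧ u ≠ v ∧ b ≠ v ∧
      (∀ x : I.V, x = I.hub ∨ x = u ∨ x = b ∨ x = v) ∧
      I.par u = I.hub ∧ I.par b = I.hub ∧ I.par v = b ∧
      (∃ π : I.V → Fin I.n, I.EF π) ∧
      (∃ π : I.V → Fin I.n, I.NonWasteful π) ∧
      ¬ ∃ π : I.V → Fin I.n, I.EF π ∧ I.NonWasteful π := by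
  refine ⟨DeliveryInstance.offCenterPath, 1, 2, 3, fun _ _ => rfl, rfl, by decide, by decide,
    by decide, by decide, by decide, by decide, by decide, rfl, rfl, rfl,
    DeliveryInstance.offCenterPath.exists_ef, ⟨_, DeliveryInstance.nonWasteful_const 0⟩, ?_⟩
  rintro ⟨π, hEF, hNW⟩
  exact hNW.not_ef_of_cost_leaves_sdiff_lt one_lt_two (by decide)
    DeliveryInstance.offCenterPath.cost_leaves_sdiff_lt hEF
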